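/- Wigner support and sign recovery (Theorem rec_wgn). Fix n ∈ ℕ, λ > 0, A ≥ 1, ρ ∈ (0,1] with ρn ∈ ℕ, and let x ∈ ℝⁿ be a (ρ,A)-sparse vector. Let Y = W + λ x xᵀ with W ~ GOE(n), and let W̃ ~ GOE(n) be independent of W. Set Y' = (Y + W̃)/√2, Y'' = (Y − W̃)/√2. Let ℓ ∈ ℕ₊, v* = argmax_{v ∈ I_{n,ℓ}} vᵀ Y' v where I_{n,ℓ} = {v ∈ {−1,0,1}ⁿ : ‖v‖₀ = ℓ}, let z = Y'' v*, and define x̄ ∈ {−1,0,1}ⁿ by x̄ⱼ = sign(zⱼ)·1{|zⱼ| > λℓ/(4A²ρn)}. Suppose ρ ≤ λ²/(338 A⁴ log n) and ℓ lies in the interval [338 A⁴ ρ² n (log n)/λ², ρn]. Then with probability at least 1 − 4 exp(−(λ²/(288 A⁴)) · ℓ/(ρ² n)) one has supp(x̄) = supp(x) and either sign(x̄) = sign(x) or sign(x̄) = −sign(x) (entrywise). -/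

import Mathlib

open MeasureTheory ProbabilityTheory Filter Matrix

/-- A vector `x ∈ ℝⁿ` is `(ρ,A)`-sparse if `‖x‖₂ = 1`, `‖x‖₀ = ρn`, and every
nonzero entry satisfies `1/(A√(ρn)) ≤ |xᵢ| ≤ A/√(ρn)`. -/
def SparseVec (n : ℕ) (ρ A : ℝ) (x : Fin n → ℝ) : Prop :=
  (∑ i, x i ^ 2) = 1 ∧
  ({i | x i ≠ 0}.ncard : ℝ) = ρ * n ∧
  ∀ i, x i ≠ 0 → 1 / (A * Real.sqrt (ρ * n)) ≤ |x i| ∧ |x i| ≤ A / Real.sqrt (ρ * n)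


/-- Matrices over `ℝ` carry the product (entrywise) measurable structure. -/
instance matrixMeasurableSpace {m n : Type*} :
    MeasurableSpace (Matrix m n ℝ) :=
  (inferInstance : MeasurableSpace (m → n → ℝ))

/-- The Gaussian orthogonal ensemble `GOE(n)`: a random symmetric `n×n` matrix with
independent entries `Wᵢᵢ ~ N(0, 2/n)` on the diagonal and `Wᵢⱼ = Wⱼᵢ ~ N(0, 1/n)`
off the diagonal, realized as a pushforward of i.i.d. standard Gaussians. -/
noncomputable def GOE (n : ℕ) : Measure (Matrix (Fin n) (Fin n) ℝ) :=
  (Measure.pi fun _ : Fin n × Fin n => gaussianReal 0 1).map fun g =>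
    Matrix.of fun i j =>
      if i = j then Real.sqrt (2 / n) * g (i, i)
      else if i < j then Real.sqrt (1 / n) * g (i, j)
      else Real.sqrt (1 / n) * g (j, i)

/-- The search set `I_{n,ℓ} = {v ∈ {−1,0,1}ⁿ : ‖v‖₀ = ℓ}`. -/
def signVecs (n ℓ : ℕ) : Set (Fin n → ℝ) :=
  {v | (∀ i, v i = -1 ∨ v i = 0 ∨ v i = 1) ∧ {i | v i ≠ 0}.ncard = ℓ}

/-- The test statistic `T = max_{v ∈ I_{n,ℓ}} vᵀ M v`. -/
noncomputable def Tstat (n ℓ : ℕ) (M : Matrix (Fin n) (Fin n) ℝ) : ℝ :=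
  sSup ((fun v => v ⬝ᵥ M.mulVec v) '' signVecs n ℓ)

lemma isGaussian_pi_stdGaussian (ι : Type*) [Fintype ι] :
    IsGaussian (Measure.pi fun _ : ι => gaussianReal 0 1) := by
  have h := iIndepFun_pi (μ := fun _ : ι => gaussianReal 0 1) (X := fun _ => id)
    (fun _ => aemeasurable_id)
  have h2 := iIndepFun.hasGaussianLaw (P := Measure.pi fun _ : ι => gaussianReal 0 1)
    (X := fun i ω => ω i) (fun i => ⟨by
      rw [(measurePreserving_eval (fun _ : ι => gaussianReal 0 1) i).map_eq]
      infer_instance⟩) h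
  simpa using h2.isGaussian_map

lemma map_rotation_pi_stdGaussian (ι : Type*) [Fintype ι] :
    ((Measure.pi fun _ : ι => gaussianReal 0 1).prod
      (Measure.pi fun _ : ι => gaussianReal 0 1)).map
        (fun p => ((Real.sqrt 2)⁻¹ • (p.1 + p.2), (Real.sqrt 2)⁻¹ • (p.1 - p.2))) =
      (Measure.pi fun _ : ι => gaussianReal 0 1).prod
        (Measure.pi fun _ : ι => gaussianReal 0 1) := by
  set μ := Measure.pi fun _ : ι => gaussianReal 0 1
  have : IsGaussian μ := isGaussian_pi_stdGaussian ι
  have h0 : μ[id] = 0 := by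
    ext i
    rw [MeasureTheory.eval_integral (fun j => IsGaussian.integrable_id.eval j)]
    have := integral_comp_eval (μ := fun _ : ι => gaussianReal 0 1) (i := i) (f := id)
      (by fun_prop)
    simp only [id_eq, integral_id_gaussianReal] at this
    simpa [μ] using this
  have h := IsGaussian.map_rotation_eq_self h0 (-(Real.pi / 4))
  have hs : (μ.prod μ).map Prod.swap = μ.prod μ := Measure.prod_swap
  have hc : √2 / 2 = (√2)⁻¹ := by
    field_simp
    norm_num
  conv_rhs => rw [← hs, ← h, Measure.map_map (by fun_prop) (by fun_prop)]
  congr 1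
  ext p i
  · simp [ContinuousLinearMap.rotation_apply, hc]
    ring
  · simp [ContinuousLinearMap.rotation_apply, hc]
    ring

/-- Gaussian tail bound for a linear combination of distinct coordinates. -/
lemma pi_stdGaussian_tail {ι κ : Type*} [Fintype ι] [Fintype κ] (p : κ → ι)
    (hp : Function.Injective p) (c : κ → ℝ) {s : ℝ} (hs : ∑ k, c k ^ 2 ≤ s)
    {t : ℝ} (ht : 0 ≤ t) :
    (Measure.pi fun _ : ι => gaussianReal 0 1) {g | t ≤ ∑ k, c k * g (p k)} ≤
      ENNReal.ofReal (Real.exp (-t ^ 2 / (2 * s))) := by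
  set μ := Measure.pi fun _ : ι => gaussianReal 0 1
  have hG : HasSubgaussianMGF id 1 (gaussianReal 0 1) :=
    ⟨fun t => integrable_exp_mul_gaussianReal t, fun t => by simp [mgf_id_gaussianReal]⟩
  have hg : ∀ i : ι, HasSubgaussianMGF (fun g : ι → ℝ => g i) 1 μ := fun i =>
    HasSubgaussianMGF.of_map (X := id) (Y := fun g : ι → ℝ => g i)
      (measurable_pi_apply i).aemeasurable (by
      rw [(measurePreserving_eval (fun _ : ι => gaussianReal 0 1) i).map_eq]
      exact hG)
  have hind : iIndepFun (fun i (g : ι → ℝ) => g i) μ :=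
    iIndepFun_pi (μ := fun _ : ι => gaussianReal 0 1) (X := fun _ => id)
      (fun _ => aemeasurable_id)
  have hind2 : iIndepFun (fun k (g : ι → ℝ) => c k * g (p k)) μ :=
    (hind.precomp hp).comp (fun k y => c k * y) (fun k => by fun_prop)
  have h := HasSubgaussianMGF.measure_sum_ge_le_of_iIndepFun hind2 (s := Finset.univ)
    (fun k _ => (hg (p k)).const_mul (c k)) ht
  have hh : μ.real {g | t ≤ ∑ k, c k * g (p k)} ≤ Real.exp (-t ^ 2 / (2 * s)) := by
    by_cases h0 : ∑ k, c k ^ 2 = 0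
    · have hc : ∀ k, c k = 0 := fun k => by
        have := (Finset.sum_eq_zero_iff_of_nonneg (fun k _ => sq_nonneg (c k))).1 h0 k
          (Finset.mem_univ k)
        simpa using this
      rcases ht.eq_or_lt with rfl | ht
      · simp [hc]
      · simp [hc, not_le.2 ht, Real.exp_nonneg]
    · refine h.trans (Real.exp_le_exp.2 ?_)
      have h1 : 0 < ∑ k, c k ^ 2 :=
        lt_of_le_of_ne (Finset.sum_nonneg fun k _ => sq_nonneg _) (Ne.symm h0)
      have he : ((∑ k, NNReal.mk (c k ^ 2) (sq_nonneg _) * 1 : NNReal) : ℝ) = ∑ k, c k ^ 2 := by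
        rw [NNReal.coe_sum]
        exact Finset.sum_congr rfl fun k _ => by rw [mul_one]; rfl
      refine (congrArg (fun r => -t ^ 2 / (2 * r)) he).trans_le ?_
      rw [neg_div, neg_div, neg_le_neg_iff]
      gcongr
  rw [← ENNReal.ofReal_toReal (measure_ne_top μ _)]
  exact ENNReal.ofReal_le_ofReal hh

lemma pi_stdGaussian_abs_tail {ι κ : Type*} [Fintype ι] [Fintype κ] (p : κ → ι)
    (hp : Function.Injective p) (c : κ → ℝ) {s : ℝ} (hs : ∑ k, c k ^ 2 ≤ s)
    {t : ℝ} (ht : 0 ≤ t) :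
    (Measure.pi fun _ : ι => gaussianReal 0 1) {g | t ≤ |∑ k, c k * g (p k)|} ≤
      ENNReal.ofReal (2 * Real.exp (-t ^ 2 / (2 * s))) := by
  have h1 := pi_stdGaussian_tail p hp c hs ht
  have h2 := pi_stdGaussian_tail p hp (fun k => -c k) (by simpa using hs) ht
  rw [two_mul, ENNReal.ofReal_add (Real.exp_nonneg _) (Real.exp_nonneg _)]
  refine (measure_mono ?_).trans ((measure_union_le _ _).trans (add_le_add h1 h2))
  intro g hg
  simpa [le_abs] using hg

/-- Lower bound for the (possibly non-measurable) set of pairs whose first coordinate is typical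
and whose second coordinate is typical given the first one. -/
lemma one_sub_le_prod_setOf {α β : Type*} [MeasurableSpace α] [MeasurableSpace β]
    (μ : Measure α) (ν : Measure β) [IsProbabilityMeasure μ] [IsProbabilityMeasure ν]
    (E : Set α) (G : α → Set β) {p q : ENNReal} (hE : μ Eᶜ ≤ p)
    (hG : ∀ a ∈ E, ν (G a)ᶜ ≤ q) :
    1 - (p + q) ≤ (μ.prod ν) {ab | ab.1 ∈ E ∧ ab.2 ∈ G ab.1} := by
  set S := {ab : α × β | ab.1 ∈ E ∧ ab.2 ∈ G ab.1}
  set H := toMeasurable (μ.prod ν) S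
  have hH : MeasurableSet H := measurableSet_toMeasurable _ _
  have hSH : S ⊆ H := subset_toMeasurable _ _
  rw [← measure_toMeasurable S]
  have hm : Measurable fun a => ν (Prod.mk a ⁻¹' Hᶜ) := measurable_measure_prodMk_left hH.compl
  set M := {a | ν (Prod.mk a ⁻¹' Hᶜ) ≤ q}
  have hM : MeasurableSet M := measurableSet_le hm measurable_const
  have hEM : E ⊆ M := fun a ha => by
    refine (measure_mono ?_).trans (hG a ha)
    intro b hb hb'
    exact hb (hSH ⟨ha, hb'⟩)
  have hle : (μ.prod ν) Hᶜ ≤ p + q := by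
    rw [Measure.prod_apply hH.compl]
    calc ∫⁻ a, ν (Prod.mk a ⁻¹' Hᶜ) ∂μ
        ≤ ∫⁻ a, (Mᶜ.indicator (fun _ => 1) a + q) ∂μ := by
          refine lintegral_mono fun a => ?_
          by_cases ha : a ∈ M
          · simpa only [Set.mem_compl_iff, ha, not_true_eq_false, not_false_eq_true,
              Set.indicator_of_notMem, zero_add] using show ν (Prod.mk a ⁻¹' Hᶜ) ≤ q from ha
          · simp only [Set.mem_compl_iff, ha, not_false_eq_true, Set.indicator_of_mem]
            exact prob_le_one.trans le_self_add
      _ = μ Mᶜ + q := by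
          rw [lintegral_add_right _ measurable_const, lintegral_indicator hM.compl]
          simp
      _ ≤ p + q := by
          gcongr
          exact (measure_mono (Set.compl_subset_compl.2 hEM)).trans hE
  have h1 := prob_add_prob_compl (μ := μ.prod ν) hH
  rw [tsub_le_iff_right, ← h1]
  gcongr

/-- The symmetric matrix built from a square array of scalars, as in the definition of `GOE`. -/
noncomputable def goeMatrix (n : ℕ) (g : Fin n × Fin n → ℝ) : Matrix (Fin n) (Fin n) ℝ :=
  Matrix.of fun i j =>
    if i = j then Real.sqrt (2 / n) * g (i, i)
    else if i < j then Real.sqrt (1 / n) * g (i, j)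
    else Real.sqrt (1 / n) * g (j, i)

lemma measurable_goeMatrix (n : ℕ) : Measurable (goeMatrix n) := by
  refine measurable_pi_lambda _ fun i => measurable_pi_lambda _ fun j => ?_
  simp only [goeMatrix, Matrix.of_apply]
  split_ifs <;> exact (measurable_pi_apply _).const_mul _

lemma goeMatrix_add (n : ℕ) (g h : Fin n × Fin n → ℝ) :
    goeMatrix n (g + h) = goeMatrix n g + goeMatrix n h := by
  ext i j
  simp only [goeMatrix, Matrix.of_apply, Matrix.add_apply, Pi.add_apply]
  split_ifs <;> ring

lemma goeMatrix_sub (n : ℕ) (g h : Fin n × Fin n → ℝ) :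
    goeMatrix n (g - h) = goeMatrix n g - goeMatrix n h := by
  ext i j
  simp only [goeMatrix, Matrix.of_apply, Matrix.sub_apply, Pi.sub_apply]
  split_ifs <;> ring

lemma goeMatrix_smul (n : ℕ) (c : ℝ) (g : Fin n × Fin n → ℝ) :
    goeMatrix n (c • g) = c • goeMatrix n g := by
  ext i j
  simp only [goeMatrix, Matrix.of_apply, Matrix.smul_apply, Pi.smul_apply, smul_eq_mul]
  split_ifs <;> ring

/-- A sum of a symmetric function over all pairs, folded onto the upper triangle. -/
lemma sum_prod_eq_sum_upper {n : ℕ} (S : Fin n → Fin n → ℝ) (hS : ∀ i j, S i j = S j i) :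
    ∑ i, ∑ j, S i j =
      ∑ p : Fin n × Fin n, if p.1 = p.2 then S p.1 p.1 else if p.1 < p.2 then 2 * S p.1 p.2
        else 0 := by
  rw [Fintype.sum_prod_type]
  have h1 : ∀ i j, S i j = (if i = j then S i i else 0) + (if i < j then S i j else 0) +
      (if j < i then S i j else 0) := by
    intro i j
    rcases lt_trichotomy i j with h | h | h
    · simp [h, h.ne, h.le]
    · simp [h]
    · simp [h, h.ne', h.le]
  have h2 : ∀ i j, (if i = j then S i i else if i < j then 2 * S i j else 0) =
      (if i = j then S i i else 0) + (if i < j then S i j else 0) +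
      (if i < j then S i j else 0) := by
    intro i j
    rcases lt_trichotomy i j with h | h | h
    · simp [h, h.ne, two_mul]
    · simp [h]
    · simp [h.ne', h.not_gt]
  have h3 : ∑ i, ∑ j, (if j < i then S i j else 0) = ∑ i, ∑ j, (if i < j then S i j else 0) := by
    rw [Finset.sum_comm]
    refine Finset.sum_congr rfl fun i _ => Finset.sum_congr rfl fun j _ => ?_
    rw [hS]
  simp_rw [h2]
  calc ∑ i, ∑ j, S i j = ∑ i, ∑ j, ((if i = j then S i i else 0) + (if i < j then S i j else 0) +
      (if j < i then S i j else 0)) :=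
        Finset.sum_congr rfl fun i _ => Finset.sum_congr rfl fun j _ => h1 i j
    _ = _ := by simp only [Finset.sum_add_distrib, h3]

lemma goeMatrix_comm (n : ℕ) (g : Fin n × Fin n → ℝ) (i j : Fin n) :
    goeMatrix n g i j = goeMatrix n g j i := by
  simp only [goeMatrix, Matrix.of_apply]
  rcases lt_trichotomy i j with h | h | h
  · simp [h, h.ne, h.ne', h.le]
  · simp [h]
  · simp [h, h.ne, h.ne', h.le]

/-- Coefficients of the quadratic form `vᵀ W v` in terms of the Gaussian array. -/
noncomputable def quadCoef {n : ℕ} (v : Fin n → ℝ) (p : Fin n × Fin n) : ℝ :=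
  if p.1 = p.2 then Real.sqrt (2 / n) * v p.1 ^ 2
  else if p.1 < p.2 then 2 * Real.sqrt (1 / n) * (v p.1 * v p.2) else 0

lemma quadForm_goeMatrix {n : ℕ} (g : Fin n × Fin n → ℝ) (v : Fin n → ℝ) :
    v ⬝ᵥ (goeMatrix n g).mulVec v = ∑ p, quadCoef v p * g p := by
  have h : v ⬝ᵥ (goeMatrix n g).mulVec v = ∑ i, ∑ j, v i * (goeMatrix n g i j * v j) := by
    simp [dotProduct, Matrix.mulVec, Finset.mul_sum]
  rw [h, sum_prod_eq_sum_upper]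
  · refine Finset.sum_congr rfl fun p _ => ?_
    obtain ⟨i, j⟩ := p
    simp only [goeMatrix, quadCoef, Matrix.of_apply]
    split_ifs with h1 h2
    · subst h1
      ring
    · ring
    · ring
  · intro i j
    rw [goeMatrix_comm]
    ring

lemma sum_quadCoef_sq {n : ℕ} (v : Fin n → ℝ) :
    ∑ p, quadCoef v p ^ 2 = 2 / n * (∑ i, v i ^ 2) ^ 2 := by
  have h : (2 / n : ℝ) * (∑ i, v i ^ 2) ^ 2 = ∑ i, ∑ j, 2 / n * (v i ^ 2 * v j ^ 2) := by
    rw [sq, Finset.sum_mul_sum, Finset.mul_sum]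
    simp_rw [Finset.mul_sum]
  rw [h, sum_prod_eq_sum_upper]
  · refine Finset.sum_congr rfl fun p _ => ?_
    obtain ⟨i, j⟩ := p
    simp only [quadCoef]
    split_ifs with h1 h2
    · rw [mul_pow, Real.sq_sqrt (by positivity)]
      ring
    · rw [mul_pow, mul_pow, Real.sq_sqrt (by positivity)]
      ring
    · simp
  · intro i j
    ring

lemma sum_sq_of_mem_signVecs {n ℓ : ℕ} {v : Fin n → ℝ} (hv : v ∈ signVecs n ℓ) :
    ∑ i, v i ^ 2 = ℓ := by
  classical
  have h : ∀ i, v i ^ 2 = if v i ≠ 0 then 1 else 0 := fun i => by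
    rcases hv.1 i with h | h | h <;> simp [h]
  simp_rw [h]
  rw [Finset.sum_boole, ← hv.2, Set.ncard_eq_toFinset_card']
  simp

lemma quadForm_tail {n ℓ : ℕ} (hn : 0 < n) (hℓ : 0 < ℓ) {v : Fin n → ℝ} (hv : v ∈ signVecs n ℓ)
    {t : ℝ} (ht : 0 ≤ t) :
    (Measure.pi fun _ : Fin n × Fin n => gaussianReal 0 1)
        {g | t ≤ v ⬝ᵥ (goeMatrix n g).mulVec v} ≤
      ENNReal.ofReal (Real.exp (-(t ^ 2 * n / (4 * ℓ ^ 2)))) := by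
  have hn' : (0 : ℝ) < n := by exact_mod_cast hn
  have hℓ' : (0 : ℝ) < ℓ := by exact_mod_cast hℓ
  have h := pi_stdGaussian_tail id Function.injective_id (quadCoef v)
    (s := 2 / n * (ℓ : ℝ) ^ 2) (by rw [sum_quadCoef_sq, sum_sq_of_mem_signVecs hv]) ht
  simp_rw [quadForm_goeMatrix]
  refine h.trans (le_of_eq ?_)
  congr 2
  field_simp
  norm_num

lemma neg_quadForm_tail {n ℓ : ℕ} (hn : 0 < n) (hℓ : 0 < ℓ) {v : Fin n → ℝ}
    (hv : v ∈ signVecs n ℓ) {t : ℝ} (ht : 0 ≤ t) :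
    (Measure.pi fun _ : Fin n × Fin n => gaussianReal 0 1)
        {g | v ⬝ᵥ (goeMatrix n g).mulVec v ≤ -t} ≤
      ENNReal.ofReal (Real.exp (-(t ^ 2 * n / (4 * ℓ ^ 2)))) := by
  have hn' : (0 : ℝ) < n := by exact_mod_cast hn
  have hℓ' : (0 : ℝ) < ℓ := by exact_mod_cast hℓ
  have h := pi_stdGaussian_tail id Function.injective_id (fun p => -quadCoef v p)
    (s := 2 / n * (ℓ : ℝ) ^ 2) (by simp [sum_quadCoef_sq, sum_sq_of_mem_signVecs hv]) ht
  simp_rw [quadForm_goeMatrix]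
  simp only [id_eq, neg_mul, Finset.sum_neg_distrib, le_neg (a := t)] at h
  refine h.trans (le_of_eq ?_)
  congr 2
  field_simp
  norm_num

lemma mulVec_tail {n ℓ : ℕ} (hn : 0 < n) (hℓ : 0 < ℓ) {v : Fin n → ℝ} (hv : v ∈ signVecs n ℓ)
    (j : Fin n) {t : ℝ} (ht : 0 ≤ t) :
    (Measure.pi fun _ : Fin n × Fin n => gaussianReal 0 1)
        {g | t ≤ |(goeMatrix n g).mulVec v j|} ≤
      ENNReal.ofReal (2 * Real.exp (-(t ^ 2 * n / (4 * ℓ)))) := by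
  have hn' : (0 : ℝ) < n := by exact_mod_cast hn
  have hℓ' : (0 : ℝ) < ℓ := by exact_mod_cast hℓ
  have h := pi_stdGaussian_abs_tail (fun i : Fin n => if j < i then (j, i) else (i, j))
    (fun a b hab => by
      simp only at hab
      split_ifs at hab with h1 h2 h2
      · simpa using hab
      · simp only [Prod.mk.injEq] at hab
        omega
      · simp only [Prod.mk.injEq] at hab
        omega
      · simpa using hab)
    (fun i => (if i = j then Real.sqrt (2 / n) else Real.sqrt (1 / n)) * v i)
    (s := 2 / n * (ℓ : ℝ)) (by
      rw [← sum_sq_of_mem_signVecs hv, Finset.mul_sum]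
      refine Finset.sum_le_sum fun i _ => ?_
      rw [mul_pow]
      refine mul_le_mul_of_nonneg_right ?_ (sq_nonneg _)
      split_ifs
      · rw [Real.sq_sqrt (by positivity)]
      · rw [Real.sq_sqrt (by positivity)]
        gcongr
        norm_num) ht
  have he : ∀ g : Fin n × Fin n → ℝ, (goeMatrix n g).mulVec v j =
      ∑ i, (if i = j then Real.sqrt (2 / n) else Real.sqrt (1 / n)) * v i *
        g (if j < i then (j, i) else (i, j)) := by
    intro g
    simp only [Matrix.mulVec, dotProduct, goeMatrix, Matrix.of_apply]
    refine Finset.sum_congr rfl fun i _ => ?_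
    rcases lt_trichotomy i j with h | h | h
    · simp [h.ne, h.ne', h.not_gt]
      ring
    · subst h
      simp
      ring
    · simp [h, h.ne, h.ne']
      ring
  simp_rw [he]
  refine h.trans (le_of_eq ?_)
  congr 3
  field_simp
  norm_num

lemma exists_finset_signVecs (n ℓ : ℕ) (hℓ : 0 < ℓ) :
    ∃ F : Finset (Fin n → ℝ), signVecs n ℓ = ↑F ∧ (F.card : ℝ) ≤ 2 * (n : ℝ) ^ ℓ := by
  classical
  let B : Finset (Fin n → ℝ) :=
    (((Finset.univ : Finset (Fin n)).powersetCard ℓ).sigma fun S => S.powerset).image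
      fun q i => if i ∈ q.2 then 1 else if i ∈ q.1 then -1 else 0
  have hB : signVecs n ℓ ⊆ ↑B := by
    intro v hv
    simp only [B, Finset.coe_image, Set.mem_image, Finset.mem_coe, Finset.mem_sigma,
      Finset.mem_powersetCard, Finset.mem_powerset]
    refine ⟨⟨Finset.univ.filter fun i => v i ≠ 0, Finset.univ.filter fun i => v i = 1⟩,
      ⟨⟨Finset.subset_univ _, ?_⟩, ?_⟩, ?_⟩
    · rw [← hv.2, Set.ncard_eq_toFinset_card']
      simp
    · intro i hi
      simp only [Finset.mem_filter, Finset.mem_univ, true_and] at hi ⊢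
      simp [hi]
    · ext i
      rcases hv.1 i with h | h | h
      · norm_num [h]
      · norm_num [h]
      · norm_num [h]
  have hfin : (signVecs n ℓ).Finite := B.finite_toSet.subset hB
  refine ⟨hfin.toFinset, by simp, ?_⟩
  have h1 : hfin.toFinset.card ≤ n.choose ℓ * 2 ^ ℓ := by
    calc hfin.toFinset.card ≤ B.card := Finset.card_le_card (by simpa using hB)
      _ ≤ _ := Finset.card_image_le
      _ = ∑ S ∈ (Finset.univ : Finset (Fin n)).powersetCard ℓ, 2 ^ ℓ := by
        rw [Finset.card_sigma]
        refine Finset.sum_congr rfl fun S hS => ?_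
        rw [Finset.card_powerset, (Finset.mem_powersetCard.1 hS).2]
      _ = n.choose ℓ * 2 ^ ℓ := by simp
  have h2 : 2 ^ ℓ ≤ 2 * ℓ.factorial := by
    clear h1 hfin hB B
    induction ℓ, hℓ using Nat.le_induction with
    | base => simp
    | succ m hm ih =>
      rw [Nat.factorial_succ, pow_succ]
      have : 1 ≤ m := hm
      nlinarith [m.factorial_pos]
  have h3 : (n.choose ℓ : ℝ) ≤ (n : ℝ) ^ ℓ / ℓ.factorial := Nat.choose_le_pow_div ℓ n
  have h2' : (2 : ℝ) ^ ℓ ≤ 2 * ℓ.factorial := by exact_mod_cast h2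
  have hf : (0 : ℝ) < ℓ.factorial := by exact_mod_cast ℓ.factorial_pos
  calc (hfin.toFinset.card : ℝ) ≤ n.choose ℓ * 2 ^ ℓ := by exact_mod_cast h1
    _ ≤ (n : ℝ) ^ ℓ / ℓ.factorial * (2 * ℓ.factorial) := by gcongr
    _ = 2 * (n : ℝ) ^ ℓ := by field_simp

lemma exists_signVecs_overlap {n ℓ : ℕ} {ρ A : ℝ} {x : Fin n → ℝ} (hx : SparseVec n ρ A x)
    (hℓ : (ℓ : ℝ) ≤ ρ * n) :
    ∃ u ∈ signVecs n ℓ, (ℓ : ℝ) * (1 / (A * Real.sqrt (ρ * n))) ≤ x ⬝ᵥ u := by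
  classical
  obtain ⟨-, hcard, hbd⟩ := hx
  have hc : ℓ ≤ (Finset.univ.filter fun i => x i ≠ 0).card := by
    rw [← hcard, Set.ncard_eq_toFinset_card'] at hℓ
    simpa using hℓ
  obtain ⟨S, hS, hSc⟩ := Finset.exists_subset_card_eq hc
  have hS0 : ∀ i ∈ S, x i ≠ 0 := fun i hi => (Finset.mem_filter.1 (hS hi)).2
  refine ⟨fun i => if i ∈ S then Real.sign (x i) else 0, ⟨fun i => ?_, ?_⟩, ?_⟩
  · by_cases hi : i ∈ S
    · simpa [hi] using Real.sign_apply_eq (x i)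
    · simp [hi]
  · have : {i | (if i ∈ S then Real.sign (x i) else 0) ≠ 0} = ↑S := by
      ext i
      by_cases hi : i ∈ S
      · simpa [hi] using hS0 i hi
      · simp [hi]
    rw [this, Set.ncard_coe_finset, hSc]
  · have : x ⬝ᵥ (fun i => if i ∈ S then Real.sign (x i) else 0) = ∑ i ∈ S, |x i| := by
      simp only [dotProduct, mul_ite, mul_zero, Finset.sum_ite_mem, Finset.univ_inter]
      refine Finset.sum_congr rfl fun i _ => ?_
      rcases lt_trichotomy (x i) 0 with h | h | h
      · rw [Real.sign_of_neg h, abs_of_neg h, mul_neg_one]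
      · simp [h]
      · rw [Real.sign_of_pos h, abs_of_pos h, mul_one]
    rw [this, ← hSc, ← nsmul_eq_mul]
    exact Finset.card_nsmul_le_sum _ _ _ fun i hi => (hbd i (hS0 i hi)).1

lemma quadForm_add_rankOne {n : ℕ} (M : Matrix (Fin n) (Fin n) ℝ) (c : ℝ) (x v : Fin n → ℝ) :
    v ⬝ᵥ (M + c • vecMulVec x x).mulVec v = v ⬝ᵥ M.mulVec v + c * (x ⬝ᵥ v) ^ 2 := by
  rw [Matrix.add_mulVec, dotProduct_add, Matrix.smul_mulVec, Matrix.vecMulVec_mulVec]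
  simp only [op_smul_eq_smul, dotProduct_smul, dotProduct_comm v x, smul_eq_mul]
  ring

/-- If the quadratic form of the noise is small, a maximizer overlaps with the signal. -/
lemma overlap_of_noise_small {n : ℕ} {M : Matrix (Fin n) (Fin n) ℝ} {c t m : ℝ} (hc : 0 < c)
    (hm : 0 ≤ m) {x u v : Fin n → ℝ} (hu : -t < u ⬝ᵥ M.mulVec u) (hv : v ⬝ᵥ M.mulVec v < t)
    (hxu : m ≤ x ⬝ᵥ u) (ht : 2 * t = c * (m ^ 2 / 2))
    (hmax : u ⬝ᵥ (M + c • vecMulVec x x).mulVec u ≤ v ⬝ᵥ (M + c • vecMulVec x x).mulVec v) :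
    m ^ 2 / 2 < (x ⬝ᵥ v) ^ 2 := by
  rw [quadForm_add_rankOne, quadForm_add_rankOne] at hmax
  have h1 : c * m ^ 2 ≤ c * (x ⬝ᵥ u) ^ 2 := by gcongr
  have h2 : c * (m ^ 2 / 2) < c * (x ⬝ᵥ v) ^ 2 := by nlinarith
  exact lt_of_mul_lt_mul_left h2 hc.le

/-- Thresholding `w + s x` at level `τ` recovers the signs of `x` up to the sign of `s`. -/
lemma threshold_recovers_sign {n : ℕ} {τ s : ℝ} (hτ : 0 < τ) {w x z xb : Fin n → ℝ}
    (hw : ∀ j, |w j| < τ) (hs : ∀ j, x j ≠ 0 → 2 * τ < |s * x j|)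
    (hz : ∀ j, z j = w j + s * x j)
    (hxb : ∀ j, xb j = if τ < |z j| then Real.sign (z j) else 0) :
    (∀ j, xb j ≠ 0 ↔ x j ≠ 0) ∧
      ((∀ j, xb j = Real.sign (x j)) ∨ (∀ j, xb j = -Real.sign (x j))) := by
  have h0 : ∀ j, x j = 0 → xb j = 0 := fun j hj => by
    rw [hxb, if_neg]
    simpa [hz, hj] using (hw j).le
  have h1 : ∀ j, x j ≠ 0 → xb j = Real.sign (s * x j) := fun j hj => by
    have hsj := hs j hj
    have hwj := abs_lt.1 (hw j)
    rcases lt_or_ge 0 (s * x j) with hp | hp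
    · rw [abs_of_pos hp] at hsj
      have hzj : τ < z j := by rw [hz]; linarith
      rw [hxb, if_pos (hzj.trans_le (le_abs_self _)), Real.sign_of_pos (hτ.trans hzj),
        Real.sign_of_pos hp]
    · rw [abs_of_nonpos hp] at hsj
      have hzj : z j < -τ := by rw [hz]; linarith
      rw [hxb, if_pos (by linarith [neg_le_abs (z j)]), Real.sign_of_neg (by linarith),
        Real.sign_of_neg (by linarith)]
  have hx0 : ∀ j, x j ≠ 0 → s * x j ≠ 0 := fun j hj h => by
    have := hs j hj
    rw [h, abs_zero] at this
    linarith
  refine ⟨fun j => ?_, ?_⟩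
  · by_cases hj : x j = 0
    · simp [hj, h0 j hj]
    · simpa [hj, h1 j hj, Real.sign_eq_zero_iff] using hx0 j hj
  · rcases lt_or_ge 0 s with hp | hp
    · left
      intro j
      by_cases hj : x j = 0
      · simp [hj, h0 j hj]
      · rw [h1 j hj]
        rcases lt_or_gt_of_ne hj with h | h
        · rw [Real.sign_of_neg h, Real.sign_of_neg (mul_neg_of_pos_of_neg hp h)]
        · rw [Real.sign_of_pos h, Real.sign_of_pos (mul_pos hp h)]
    · right
      intro j
      by_cases hj : x j = 0
      · simp [hj, h0 j hj]
      · have hs0 : s < 0 := lt_of_le_of_ne hp fun h => hx0 j hj (by simp [h])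
        rw [h1 j hj]
        rcases lt_or_gt_of_ne hj with h | h
        · rw [Real.sign_of_neg h, Real.sign_of_pos (mul_pos_of_neg_of_neg hs0 h), neg_neg]
        · rw [Real.sign_of_pos h, Real.sign_of_neg (mul_neg_of_neg_of_pos hs0 h)]

lemma failure_bound {n ℓ : ℕ} (hn : 2 ≤ n) (hℓ : 0 < ℓ) {X : ℝ} (hX : 338 * Real.log n ≤ X) :
    (2 * (n : ℝ) ^ ℓ + 1) * Real.exp (-(ℓ * X / 128)) + n * (2 * Real.exp (-(X / 64))) ≤
      4 * Real.exp (-(X / 288)) := by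
  have hn' : (2 : ℝ) ≤ n := by exact_mod_cast hn
  have hℓ' : (1 : ℝ) ≤ ℓ := by exact_mod_cast hℓ
  have hn0 : (0 : ℝ) < n := by linarith
  have hlog : 0 ≤ Real.log n := Real.log_nonneg (by linarith)
  have hX0 : 0 ≤ X := by linarith
  have hℓX : X ≤ ℓ * X := by nlinarith
  have hnX : (n : ℝ) ≤ Real.exp (X / 338) := by
    rw [← Real.log_le_iff_le_exp hn0]
    linarith
  have hpow : (n : ℝ) ^ ℓ ≤ Real.exp (ℓ * X / 338) := by
    calc (n : ℝ) ^ ℓ ≤ Real.exp (X / 338) ^ ℓ := by gcongr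
      _ = Real.exp (ℓ * X / 338) := by rw [← Real.exp_nat_mul, mul_div_assoc]
  have h1 : (2 * (n : ℝ) ^ ℓ + 1) * Real.exp (-(ℓ * X / 128)) ≤ 3 * Real.exp (-(X / 288)) := by
    have hone : (1 : ℝ) ≤ Real.exp (ℓ * X / 338) := Real.one_le_exp (by positivity)
    calc (2 * (n : ℝ) ^ ℓ + 1) * Real.exp (-(ℓ * X / 128))
        ≤ (3 * Real.exp (ℓ * X / 338)) * Real.exp (-(ℓ * X / 128)) := by
          gcongr
          linarith
      _ = 3 * Real.exp (ℓ * X / 338 + -(ℓ * X / 128)) := by rw [Real.exp_add]; ring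
      _ ≤ 3 * Real.exp (-(X / 288)) := by
          gcongr
          linarith
  have h2 : n * (2 * Real.exp (-(X / 64))) ≤ Real.exp (-(X / 288)) := by
    calc n * (2 * Real.exp (-(X / 64)))
        ≤ Real.exp (X / 338) * (Real.exp (X / 338) * Real.exp (-(X / 64))) := by
          gcongr
          linarith
      _ = Real.exp (X / 338 + (X / 338 + -(X / 64))) := by rw [Real.exp_add, Real.exp_add]
      _ ≤ Real.exp (-(X / 288)) := Real.exp_le_exp.2 (by linarith)
  linarith

lemma prob_noise_small {n ℓ : ℕ} (hn : 0 < n) (hℓ : 0 < ℓ) {u : Fin n → ℝ}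
    (hu : u ∈ signVecs n ℓ) {t : ℝ} (ht : 0 ≤ t) :
    (Measure.pi fun _ : Fin n × Fin n => gaussianReal 0 1)
        {g | (∀ v ∈ signVecs n ℓ, v ⬝ᵥ (goeMatrix n g).mulVec v < t) ∧
          -t < u ⬝ᵥ (goeMatrix n g).mulVec u}ᶜ ≤
      ENNReal.ofReal ((2 * (n : ℝ) ^ ℓ + 1) * Real.exp (-(t ^ 2 * n / (4 * ℓ ^ 2)))) := by
  obtain ⟨F, hF, hcard⟩ := exists_finset_signVecs n ℓ hℓ
  set μ := Measure.pi fun _ : Fin n × Fin n => gaussianReal 0 1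
  set e := Real.exp (-(t ^ 2 * n / (4 * ℓ ^ 2)))
  have he : 0 ≤ e := Real.exp_nonneg _
  calc μ _ ≤ μ ((⋃ v ∈ F, {g | t ≤ v ⬝ᵥ (goeMatrix n g).mulVec v}) ∪
        {g | u ⬝ᵥ (goeMatrix n g).mulVec u ≤ -t}) := by
        refine measure_mono fun g hg => ?_
        rw [hF] at hg
        by_contra h
        simp only [Set.mem_union, Set.mem_iUnion, Set.mem_ofPred_eq, not_or, not_exists,
          not_le] at h
        exact hg ⟨fun v hv => h.1 v hv, h.2⟩
    _ ≤ ∑ v ∈ F, ENNReal.ofReal e + ENNReal.ofReal e := by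
        refine (measure_union_le _ _).trans (add_le_add ?_ (neg_quadForm_tail hn hℓ hu ht))
        refine (measure_biUnion_finset_le _ _).trans (Finset.sum_le_sum fun v hv => ?_)
        exact quadForm_tail hn hℓ (by rw [hF]; exact hv) ht
    _ = ENNReal.ofReal ((F.card + 1) * e) := by
        rw [Finset.sum_const, nsmul_eq_mul, add_mul, one_mul,
          ENNReal.ofReal_add (by positivity) he, ENNReal.ofReal_mul (by positivity),
          ENNReal.ofReal_natCast]
    _ ≤ _ := ENNReal.ofReal_le_ofReal (by gcongr)

lemma prob_mulVec_small {n ℓ : ℕ} (hn : 0 < n) (hℓ : 0 < ℓ) {v : Fin n → ℝ}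
    (hv : v ∈ signVecs n ℓ) {t : ℝ} (ht : 0 ≤ t) :
    (Measure.pi fun _ : Fin n × Fin n => gaussianReal 0 1)
        {g | ∀ j, |(goeMatrix n g).mulVec v j| < t}ᶜ ≤
      ENNReal.ofReal (n * (2 * Real.exp (-(t ^ 2 * n / (4 * ℓ))))) := by
  set μ := Measure.pi fun _ : Fin n × Fin n => gaussianReal 0 1
  calc μ _ ≤ μ (⋃ j ∈ Finset.univ, {g | t ≤ |(goeMatrix n g).mulVec v j|}) := by
        refine measure_mono fun g hg => ?_
        simpa using hg
    _ ≤ ∑ j : Fin n, ENNReal.ofReal (2 * Real.exp (-(t ^ 2 * n / (4 * ℓ)))) :=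
        (measure_biUnion_finset_le _ _).trans
          (Finset.sum_le_sum fun j _ => mulVec_tail hn hℓ hv j ht)
    _ = _ := by
        rw [Finset.sum_const, nsmul_eq_mul, ENNReal.ofReal_mul (Nat.cast_nonneg n),
          ENNReal.ofReal_natCast, Finset.card_univ, Fintype.card_fin]

/-- Pulling events for a pair of independent `GOE` matrices back to the Gaussian arrays of their
normalized sum and difference; no measurability of the event is needed. -/
lemma measure_le_GOE_prod (n : ℕ) (S : Set (Matrix (Fin n) (Fin n) ℝ × Matrix (Fin n) (Fin n) ℝ)) :
    ((Measure.pi fun _ : Fin n × Fin n => gaussianReal 0 1).prod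
      (Measure.pi fun _ : Fin n × Fin n => gaussianReal 0 1))
        {p | ((Real.sqrt 2)⁻¹ • (goeMatrix n p.1 + goeMatrix n p.2),
          (Real.sqrt 2)⁻¹ • (goeMatrix n p.1 - goeMatrix n p.2)) ∈ S} ≤
      ((GOE n).prod (GOE n)) S := by
  set μ := Measure.pi fun _ : Fin n × Fin n => gaussianReal 0 1
  have hm := measurable_goeMatrix n
  have hG : GOE n = μ.map (goeMatrix n) := rfl
  have h1 : (GOE n).prod (GOE n) = (μ.prod μ).map (Prod.map (goeMatrix n) (goeMatrix n)) := by
    rw [hG, Measure.map_prod_map _ _ hm hm]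
  rw [h1]
  refine le_trans ?_ (Measure.le_map_apply (hm.prodMap hm).aemeasurable S)
  conv_rhs => rw [← map_rotation_pi_stdGaussian (Fin n × Fin n)]
  refine le_trans (measure_mono ?_) (Measure.le_map_apply (by fun_prop) _)
  intro p hp
  simpa [goeMatrix_smul, goeMatrix_add, goeMatrix_sub] using hp

/-- **Wigner support and sign recovery** (Theorem rec_wgn). Let `Y = W + λxxᵀ` with
`W ~ GOE(n)`, `W̃ ~ GOE(n)` independent, `Y' = (Y+W̃)/√2`, `Y'' = (Y−W̃)/√2`; let
`v*` be any maximizer of `vᵀY'v` over `I_{n,ℓ}`, `z = Y''v*`, and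
`x̄ⱼ = sign(zⱼ)·1{|zⱼ| > λℓ/(4A²ρn)}`. Under the stated conditions on `ρ` and `ℓ`,
with probability at least `1 − 4 exp(−(λ²/(288A⁴))·ℓ/(ρ²n))` one has
`supp(x̄) = supp(x)` and `sign(x̄) = ±sign(x)`. -/
theorem wigner_support_sign_recovery (n : ℕ) (hn : 0 < n)
    (lam A ρ : ℝ) (hlam : 0 < lam) (hA : 1 ≤ A) (hρ0 : 0 < ρ) (hρ1 : ρ ≤ 1)
    (x : Fin n → ℝ) (hx : SparseVec n ρ A x)
    (ℓ : ℕ) (hℓ : 0 < ℓ)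
    (hρcond : ρ ≤ lam ^ 2 / (338 * A ^ 4) * (1 / Real.log n))
    (hℓlo : 338 * A ^ 4 / lam ^ 2 * (ρ ^ 2 * n * Real.log n) ≤ (ℓ : ℝ))
    (hℓhi : (ℓ : ℝ) ≤ ρ * n)
    (vstar : Matrix (Fin n) (Fin n) ℝ → (Fin n → ℝ))
    (hvstar : ∀ M : Matrix (Fin n) (Fin n) ℝ, vstar M ∈ signVecs n ℓ ∧
      ∀ v ∈ signVecs n ℓ, v ⬝ᵥ M.mulVec v ≤ vstar M ⬝ᵥ M.mulVec (vstar M))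
    (z : Matrix (Fin n) (Fin n) ℝ × Matrix (Fin n) (Fin n) ℝ → (Fin n → ℝ))
    (hz : ∀ p : Matrix (Fin n) (Fin n) ℝ × Matrix (Fin n) (Fin n) ℝ,
      z p = ((Real.sqrt 2)⁻¹ • (p.1 + lam • vecMulVec x x - p.2)).mulVec
        (vstar ((Real.sqrt 2)⁻¹ • (p.1 + lam • vecMulVec x x + p.2))))
    (xbar : Matrix (Fin n) (Fin n) ℝ × Matrix (Fin n) (Fin n) ℝ → (Fin n → ℝ))
    (hxbar : ∀ p j, xbar p j =
      if lam * ℓ / (4 * A ^ 2 * ρ * n) < |z p j| then Real.sign (z p j) else 0) :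
    1 - ENNReal.ofReal
        (4 * Real.exp (-(lam ^ 2 / (288 * A ^ 4)) * ((ℓ : ℝ) / (ρ ^ 2 * n)))) ≤
      ((GOE n).prod (GOE n))
        {p | (∀ j, xbar p j ≠ 0 ↔ x j ≠ 0) ∧
          ((∀ j, xbar p j = Real.sign (x j)) ∨ (∀ j, xbar p j = -Real.sign (x j)))} := by
  have hn' : (0 : ℝ) < n := by exact_mod_cast hn
  have hℓ' : (0 : ℝ) < ℓ := by exact_mod_cast hℓ
  have hA0 : 0 < A := by linarith
  have hn2 : 2 ≤ n := by
    by_contra h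
    have h1 : n = 1 := by omega
    subst h1
    simp at hρcond
    linarith
  set c := (Real.sqrt 2)⁻¹ * lam with hc
  have h2 : (0 : ℝ) < Real.sqrt 2 := by positivity
  have hsq2 : Real.sqrt 2 ^ 2 = 2 := Real.sq_sqrt (by norm_num)
  have hcpos : 0 < c := by positivity
  have hc2 : c ^ 2 = lam ^ 2 / 2 := by
    rw [hc, mul_pow, inv_pow, hsq2]
    ring
  have hk : 0 < ρ * n := by positivity
  have hsk : Real.sqrt (ρ * n) ^ 2 = ρ * n := Real.sq_sqrt hk.le
  set m := (ℓ : ℝ) * (1 / (A * Real.sqrt (ρ * n))) with hm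
  have hmpos : 0 < m := by positivity
  have hm2 : m ^ 2 = ℓ ^ 2 / (A ^ 2 * (ρ * n)) := by
    rw [hm, mul_pow, div_pow, mul_pow, hsk]
    ring
  set t := c * (m ^ 2 / 4) with ht
  have ht0 : 0 ≤ t := by positivity
  set τ := lam * ℓ / (4 * A ^ 2 * ρ * n) with hτ
  have hτ0 : 0 < τ := by positivity
  set X := lam ^ 2 / A ^ 4 * ((ℓ : ℝ) / (ρ ^ 2 * n)) with hX
  have hXlog : 338 * Real.log n ≤ X := by
    rw [hX, div_mul_div_comm, le_div_iff₀ (by positivity)]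
    rw [div_mul_eq_mul_div, div_le_iff₀ (by positivity)] at hℓlo
    linarith
  have htX : t ^ 2 * n / (4 * ℓ ^ 2) = ℓ * X / 128 := by
    rw [ht, mul_pow, hc2, hm2, hX]
    field_simp
    norm_num
  have hτX : τ ^ 2 * n / (4 * ℓ) = X / 64 := by
    rw [hτ, hX]
    field_simp
    norm_num
  have hfinal : -(lam ^ 2 / (288 * A ^ 4)) * ((ℓ : ℝ) / (ρ ^ 2 * n)) = -(X / 288) := by
    rw [hX]
    field_simp
  obtain ⟨u, hu, hxu⟩ := exists_signVecs_overlap hx hℓhi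
  have hE := prob_noise_small hn hℓ hu ht0
  rw [htX] at hE
  set Y : (Fin n × Fin n → ℝ) → Matrix (Fin n) (Fin n) ℝ :=
    fun g => goeMatrix n g + c • vecMulVec x x with hY
  have hmain := one_sub_le_prod_setOf (Measure.pi fun _ : Fin n × Fin n => gaussianReal 0 1)
    (Measure.pi fun _ : Fin n × Fin n => gaussianReal 0 1) _
    (fun g => {h | ∀ j, |(goeMatrix n h).mulVec (vstar (Y g)) j| < τ}) hE
    (fun g _ => prob_mulVec_small hn hℓ (hvstar (Y g)).1 hτ0.le)
  rw [hτX] at hmain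
  refine le_trans ?_ (hmain.trans ((measure_mono ?_).trans (measure_le_GOE_prod n _)))
  · rw [← ENNReal.ofReal_add (by positivity) (by positivity), hfinal]
    exact tsub_le_tsub_left (ENNReal.ofReal_le_ofReal (failure_bound hn2 hℓ hXlog)) _
  rintro ⟨g, h⟩ ⟨⟨hg, hgu⟩, hh⟩
  have hhalf : (Real.sqrt 2)⁻¹ * (Real.sqrt 2)⁻¹ = (1 / 2 : ℝ) := by
    rw [← mul_inv, ← sq, hsq2]
    norm_num
  have hsum : (Real.sqrt 2)⁻¹ • ((Real.sqrt 2)⁻¹ • (goeMatrix n g + goeMatrix n h) +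
      lam • vecMulVec x x + (Real.sqrt 2)⁻¹ • (goeMatrix n g - goeMatrix n h)) = Y g := by
    ext i j
    simp only [hY, hc, Matrix.smul_apply, Matrix.add_apply, Matrix.sub_apply, smul_eq_mul]
    linear_combination (2 * goeMatrix n g i j) * hhalf
  have hdiff : (Real.sqrt 2)⁻¹ • ((Real.sqrt 2)⁻¹ • (goeMatrix n g + goeMatrix n h) +
      lam • vecMulVec x x - (Real.sqrt 2)⁻¹ • (goeMatrix n g - goeMatrix n h)) = Y h := by
    ext i j
    simp only [hY, hc, Matrix.smul_apply, Matrix.add_apply, Matrix.sub_apply, smul_eq_mul]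
    linear_combination (2 * goeMatrix n h i j) * hhalf
  set v := vstar (Y g) with hv
  obtain ⟨hvmem, hvmax⟩ := hvstar (Y g)
  have hover : m ^ 2 / 2 < (x ⬝ᵥ v) ^ 2 :=
    overlap_of_noise_small hcpos hmpos.le hgu (hg v hvmem) hxu (by rw [ht]; ring) (hvmax u hu)
  refine threshold_recovers_sign hτ0 (w := (goeMatrix n h).mulVec v) (s := c * (x ⬝ᵥ v)) hh
    (fun j hj => ?_) (fun j => ?_) (hxbar _)
  · have hxj : (1 / (A * Real.sqrt (ρ * n))) ^ 2 ≤ x j ^ 2 := by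
      rw [← sq_abs (x j)]
      have := (hx.2.2 j hj).1
      gcongr
    rw [div_pow, mul_pow, hsk, one_pow] at hxj
    refine lt_of_pow_lt_pow_left₀ 2 (abs_nonneg _) ?_
    rw [sq_abs, mul_pow (c * _), mul_pow c, hc2]
    calc (2 * τ) ^ 2 = lam ^ 2 / 2 * (m ^ 2 / 2) * (1 / (A ^ 2 * (ρ * n))) := by
          rw [hτ, hm2]
          field_simp
          norm_num
      _ < lam ^ 2 / 2 * (x ⬝ᵥ v) ^ 2 * (1 / (A ^ 2 * (ρ * n))) := by gcongr
      _ ≤ lam ^ 2 / 2 * (x ⬝ᵥ v) ^ 2 * x j ^ 2 := by gcongr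
  · rw [hz]
    simp only [hsum, hdiff]
    rw [← hv, hY, Matrix.add_mulVec, Matrix.smul_mulVec, Matrix.vecMulVec_mulVec]
    simp
    ring
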